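/- Suppose i ≥ j ≥ 1. There is a unique S-linear map α : I_i → I_j with α(t) = 0 and α(x^i) = t, and the inclusion I_i ⊆ I_j (valid since x^i = x^{i−j}·x^j ∈ I_j) defines an S-linear map β : I_i → I_j. The S-module map S² → Hom_S(I_i, I_j) sending (s₁, s₂) to s₁α + s₂β is surjective, and its kernel is the S-submodule of S² generated by (t, 0) and (x^i, −t). (Thus Hom_S(I_i, I_j) is generated by α and β subject exactly to the relations tα = 0 and x^i α = t β.) -/

import Mathlib

/-! The proof only uses three facts about `S = k[x, t]/(t²)`: `t² = 0`, the annihilator of `t`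
is `(t)` (`tS_mul_eq_zero`), and `x` is a nonzerodivisor (`xS_pow_mul_eq_zero`); the last two hold
because `k[x, t]` is a domain in which `t` is a prime not dividing `x`.

*Existence of `α`.* If `y = a t + b xⁱ` in `I_i`, then `t y = xⁱ (b t)`, so `α y` is the
unique `z` with `t y = xⁱ z`; characterised this way, `z` is visibly linear in `y`.

*Surjectivity.* For given `f`, let `u = f(t)` and `v = f(xⁱ)`. Then `t u = f(t²) = 0` gives `u = t c`,
and `xⁱ u = t v` gives `t (v - xⁱ c) = 0`, so `v = xⁱ c + t w`. Hence `f = w α + c β`, since both sides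
agree on the generators.

*Kernel.* If `s₁ α + s₂ β = 0`, evaluating at `t` gives `s₂ t = 0`, so `s₂ = t c`; evaluating at
`xⁱ` gives `t (s₁ + xⁱ c) = 0`, so `s₁ + xⁱ c = t d`, i.e.
`(s₁, s₂) = d (t, 0) - c (xⁱ, -t)`. -/


set_option synthInstance.maxHeartbeats 1000000
set_option maxHeartbeats 1000000

/-- The ring `S = k[x, t]/(t²)`, with `x = X 0` and `t = X 1`. -/
abbrev Sring (k : Type*) [Field k] : Type _ :=
  MvPolynomial (Fin 2) k ⧸
    (Ideal.span {(MvPolynomial.X 1 : MvPolynomial (Fin 2) k) ^ 2})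

/-- The element `x` of `S`. -/
noncomputable def xS (k : Type*) [Field k] : Sring k :=
  Ideal.Quotient.mk _ (MvPolynomial.X 0)

/-- The element `t` of `S`. -/
noncomputable def tS (k : Type*) [Field k] : Sring k :=
  Ideal.Quotient.mk _ (MvPolynomial.X 1)

/-- The ideal `I_m = (t, xᵐ)` of `S`, regarded as an `S`-module. -/
noncomputable abbrev Imod (k : Type*) [Field k] (m : ℕ) : Submodule (Sring k) (Sring k) :=
  Ideal.span {tS k, xS k ^ m}

/-- The element `t` of `I_m`. -/
noncomputable def tEl (k : Type*) [Field k] (m : ℕ) : Imod k m :=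
  ⟨tS k, Submodule.subset_span (Set.mem_insert _ _)⟩

/-- The element `xᵐ` of `I_m`. -/
noncomputable def xEl (k : Type*) [Field k] (m : ℕ) : Imod k m :=
  ⟨xS k ^ m, Submodule.subset_span (Set.mem_insert_of_mem _ rfl)⟩

theorem tS_mul_tS (k : Type*) [Field k] : tS k * tS k = 0 := by
  rw [tS, ← map_mul, ← pow_two]
  exact Ideal.Quotient.eq_zero_iff_mem.2 (Ideal.mem_span_singleton_self _)

/-- The annihilator of `t` is the ideal `(t)`. -/
theorem tS_mul_eq_zero {k : Type*} [Field k] {a : Sring k} (h : tS k * a = 0) :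
    ∃ b, a = tS k * b := by
  obtain ⟨p, rfl⟩ := Ideal.Quotient.mk_surjective a
  rw [tS, ← map_mul, Ideal.Quotient.eq_zero_iff_mem, Ideal.mem_span_singleton, pow_two] at h
  obtain ⟨q, rfl⟩ := (mul_dvd_mul_iff_left (MvPolynomial.X_ne_zero _)).1 h
  exact ⟨Ideal.Quotient.mk _ q, map_mul _ _ _⟩

/-- Powers of `x` are nonzerodivisors in `S`. -/
theorem xS_pow_mul_eq_zero {k : Type*} [Field k] {m : ℕ} {a : Sring k}
    (h : xS k ^ m * a = 0) : a = 0 := by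
  obtain ⟨p, rfl⟩ := Ideal.Quotient.mk_surjective a
  rw [xS, ← map_pow, ← map_mul, Ideal.Quotient.eq_zero_iff_mem, Ideal.mem_span_singleton] at h
  rw [Ideal.Quotient.eq_zero_iff_mem, Ideal.mem_span_singleton]
  have hp : Prime (MvPolynomial.X 1 : MvPolynomial (Fin 2) k) := MvPolynomial.X_prime
  refine hp.pow_dvd_of_dvd_mul_left 2 (fun h' => ?_) h
  have := hp.dvd_of_dvd_pow h'
  rw [MvPolynomial.X_dvd_X] at this
  simp at this

/-- A linear map out of `I_i` is determined by its values at `t` and `xⁱ`. -/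
theorem Imod_hom_ext {k : Type*} [Field k] {i j : ℕ} {f g : Imod k i →ₗ[Sring k] Imod k j}
    (ht : (f (tEl k i) : Sring k) = g (tEl k i)) (hx : (f (xEl k i) : Sring k) = g (xEl k i)) :
    f = g := by
  ext ⟨y, hy⟩
  obtain ⟨a, b, rfl⟩ := Ideal.mem_span_pair.1 hy
  have e : (⟨a * tS k + b * xS k ^ i, hy⟩ : Imod k i) = a • tEl k i + b • xEl k i := rfl
  rw [e, map_add, map_add, map_smul, map_smul, map_smul, map_smul, Subtype.ext ht, Subtype.ext hx]

theorem exists_alpha (k : Type*) [Field k] (i j : ℕ) :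
    ∃ α : Imod k i →ₗ[Sring k] Imod k j,
      (α (tEl k i) : Sring k) = 0 ∧ (α (xEl k i) : Sring k) = tS k := by
  have ex : ∀ y : Imod k i, ∃ z : Imod k j, tS k * (y : Sring k) = xS k ^ i * (z : Sring k) := by
    rintro ⟨y, hy⟩
    obtain ⟨a, b, rfl⟩ := Ideal.mem_span_pair.1 hy
    refine ⟨b • tEl k j, ?_⟩
    change tS k * (a * tS k + b * xS k ^ i) = xS k ^ i * (b * tS k)
    linear_combination a * tS_mul_tS k
  have uniq : ∀ z w : Sring k, xS k ^ i * z = xS k ^ i * w → z = w := fun z w h =>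
    sub_eq_zero.1 (xS_pow_mul_eq_zero (m := i) (by rw [mul_sub, h, sub_self]))
  choose f hf using ex
  refine ⟨⟨⟨f, fun y z => ?_⟩, fun s y => ?_⟩, ?_, ?_⟩
  · apply Subtype.ext
    apply uniq
    rw [← hf, Submodule.coe_add, Submodule.coe_add, mul_add, mul_add, hf, hf]
  · apply Subtype.ext
    apply uniq
    rw [← hf, RingHom.id_apply, Submodule.coe_smul, Submodule.coe_smul, smul_eq_mul, smul_eq_mul,
      mul_left_comm, hf, mul_left_comm]
  · apply uniq
    exact (hf _).symm.trans ((tS_mul_tS k).trans (mul_zero _).symm)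
  · apply uniq
    exact (hf _).symm.trans (mul_comm _ _)

/-- `i ≥ j ≥ 1`: there is a unique `S`-linear `α : I_i → I_j` with
`α(t) = 0`, `α(xⁱ) = t`; with `β : I_i → I_j` the inclusion `I_i ⊆ I_j`, the
`S`-module map `S² → Hom_S(I_i, I_j)`, `(s₁, s₂) ↦ s₁α + s₂β`, is surjective
with kernel generated by `(t, 0)` and `(xⁱ, −t)`. -/
theorem hom_Ii_Ij_ge (k : Type*) [Field k] (i j : ℕ) (hj : 1 ≤ j) (hij : j ≤ i) :
    (∃! α : Imod k i →ₗ[Sring k] Imod k j,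
      (α (tEl k i) : Sring k) = 0 ∧ (α (xEl k i) : Sring k) = tS k) ∧
    (∀ (α β : Imod k i →ₗ[Sring k] Imod k j)
      (Φ : Sring k × Sring k →ₗ[Sring k] (Imod k i →ₗ[Sring k] Imod k j)),
      ((α (tEl k i) : Sring k) = 0 ∧ (α (xEl k i) : Sring k) = tS k) →
      (∀ m : Imod k i, (β m : Sring k) = (m : Sring k)) →
      (∀ s₁ s₂ : Sring k, Φ (s₁, s₂) = s₁ • α + s₂ • β) →
      Function.Surjective Φ ∧
      LinearMap.ker Φ =
        Submodule.span (Sring k) {(tS k, 0), (xS k ^ i, -tS k)}) := by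
  refine ⟨?_, fun α β Φ ⟨hαt, hαx⟩ hβ hΦ => ?_⟩
  · obtain ⟨α, ht, hx⟩ := exists_alpha k i j
    exact ⟨α, ⟨ht, hx⟩, fun α' h => Imod_hom_ext (h.1.trans ht.symm) (h.2.trans hx.symm)⟩
  have hβt : (β (tEl k i) : Sring k) = tS k := hβ _
  have hβx : (β (xEl k i) : Sring k) = xS k ^ i := hβ _
  have hΦt : ∀ s₁ s₂, (Φ (s₁, s₂) (tEl k i) : Sring k) = s₂ * tS k := fun s₁ s₂ => by
    rw [hΦ, LinearMap.add_apply, LinearMap.smul_apply, LinearMap.smul_apply, Submodule.coe_add,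
      Submodule.coe_smul, Submodule.coe_smul, hαt, hβt, smul_zero, zero_add, smul_eq_mul]
  have hΦx : ∀ s₁ s₂, (Φ (s₁, s₂) (xEl k i) : Sring k) = s₁ * tS k + s₂ * xS k ^ i :=
    fun s₁ s₂ => by
    rw [hΦ, LinearMap.add_apply, LinearMap.smul_apply, LinearMap.smul_apply, Submodule.coe_add,
      Submodule.coe_smul, Submodule.coe_smul, hαx, hβx, smul_eq_mul, smul_eq_mul]
  constructor
  · intro f
    -- `f` applied to the syzygies `t • t = 0` and `xⁱ • t = t • xⁱ` between the generators.
    have h1 : tS k * (f (tEl k i) : Sring k) = 0 := by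
      have e : tS k • tEl k i = 0 := Subtype.ext (tS_mul_tS k)
      have := congrArg (fun z => (f z : Sring k)) e
      simpa only [map_smul, map_zero, Submodule.coe_smul, smul_eq_mul, Submodule.coe_zero] using this
    have h2 : xS k ^ i * (f (tEl k i) : Sring k) = tS k * (f (xEl k i) : Sring k) := by
      have e : xS k ^ i • tEl k i = tS k • xEl k i := Subtype.ext (mul_comm _ _)
      have := congrArg (fun z => (f z : Sring k)) e
      simpa only [map_smul, Submodule.coe_smul, smul_eq_mul] using this
    obtain ⟨c, hc⟩ := tS_mul_eq_zero h1
    obtain ⟨w, hw⟩ := tS_mul_eq_zero (a := (f (xEl k i) : Sring k) - xS k ^ i * c) (by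
      linear_combination -h2 + xS k ^ i * hc)
    refine ⟨(w, c), Imod_hom_ext ?_ ?_⟩
    · rw [hΦt, hc, mul_comm]
    · rw [hΦx]
      linear_combination -hw
  · apply le_antisymm
    · rintro ⟨s₁, s₂⟩ hs
      rw [LinearMap.mem_ker] at hs
      have h1 := hΦt s₁ s₂
      have h2 := hΦx s₁ s₂
      rw [hs, LinearMap.zero_apply, Submodule.coe_zero] at h1 h2
      obtain ⟨c, hc⟩ := tS_mul_eq_zero (a := s₂) (by linear_combination -h1)
      obtain ⟨d, hd⟩ := tS_mul_eq_zero (a := s₁ + xS k ^ i * c) (by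
        linear_combination -h2 - xS k ^ i * hc)
      refine Submodule.mem_span_pair.2 ⟨d, -c, Prod.ext ?_ ?_⟩
      · change d * tS k + -c * xS k ^ i = s₁
        linear_combination -hd
      · change d * 0 + -c * -tS k = s₂
        linear_combination -hc
    · rw [Submodule.span_le]
      rintro _ (rfl | rfl)
      · refine LinearMap.mem_ker.2 (Imod_hom_ext ?_ ?_)
        · rw [hΦt, zero_mul]
          rfl
        · rw [hΦx, zero_mul, add_zero, tS_mul_tS]
          rfl
      · refine LinearMap.mem_ker.2 (Imod_hom_ext ?_ ?_)
        · rw [hΦt]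
          change -tS k * tS k = 0
          linear_combination -tS_mul_tS k
        · rw [hΦx]
          change xS k ^ i * tS k + -tS k * xS k ^ i = 0
          ring
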